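/- There exists a set X ⊆ ω^ω such that X belongs to the tree ideal m₀ but X does not belong to the tree ideal cl₀. -/

import Mathlib

open Cardinal Set

/-- A tree on ω: a nonempty set of finite sequences closed under initial segments. -/
def IsTree (T : Set (List ℕ)) : Prop :=
  T.Nonempty ∧ ∀ s ∈ T, ∀ n : ℕ, s.take n ∈ T

/-- The body of a tree: all infinite branches. -/
def treeBody (T : Set (List ℕ)) : Set (ℕ → ℕ) :=
  {x | ∀ n : ℕ, (List.ofFn fun i : Fin n => x i) ∈ T}

/-- Immediate successors of a node in a tree. -/
def succs (T : Set (List ℕ)) (t : List ℕ) : Set ℕ := {n | t ++ [n] ∈ T}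

/-- Sacks (perfect) tree: every node has an extension with at least two immediate successors. -/
def IsSacksTree (T : Set (List ℕ)) : Prop :=
  IsTree T ∧ ∀ s ∈ T, ∃ t ∈ T, s <+: t ∧ (succs T t).Nontrivial

/-- Miller tree: every node has an extension with infinitely many immediate successors. -/
def IsMillerTree (T : Set (List ℕ)) : Prop :=
  IsTree T ∧ ∀ s ∈ T, ∃ t ∈ T, s <+: t ∧ (succs T t).Infinite

/-- Laver tree: has a stem (a node comparable with every node) such that every node
extending the stem has infinitely many immediate successors. -/
def IsLaverTree (T : Set (List ℕ)) : Prop :=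
  IsTree T ∧ ∃ s ∈ T, (∀ t ∈ T, s <+: t ∨ t <+: s) ∧
    ∀ t ∈ T, s <+: t → (succs T t).Infinite

/-- Complete Laver tree: every node has infinitely many immediate successors. -/
def IsCompleteLaverTree (T : Set (List ℕ)) : Prop :=
  IsTree T ∧ ∀ t ∈ T, (succs T t).Infinite

/-- The tree ideal t₀ associated with a family of trees 𝕋. -/
def treeIdeal (𝕋 : Set (Set (List ℕ))) : Set (Set (ℕ → ℕ)) :=
  {A | ∀ P ∈ 𝕋, ∃ Q ∈ 𝕋, Q ⊆ P ∧ treeBody Q ∩ A = ∅}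

/-- t-measurability with respect to a family of trees 𝕋. -/
def TMeasurable (𝕋 : Set (Set (List ℕ))) (A : Set (ℕ → ℕ)) : Prop :=
  ∀ P ∈ 𝕋, ∃ Q ∈ 𝕋, Q ⊆ P ∧ (treeBody Q ⊆ A ∨ treeBody Q ∩ A = ∅)

/-- 𝕋-Bernstein set: meets and omits the body of every tree in 𝕋. -/
def TBernstein (𝕋 : Set (Set (List ℕ))) (B : Set (ℕ → ℕ)) : Prop :=
  ∀ T ∈ 𝕋, (B ∩ treeBody T).Nonempty ∧ (B \ treeBody T).Nonempty

/-! Call a tree low-splitting for `g` if its splitting nodes branch only through values below `g`,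
while its branches exceed `g` at every even position, and high-splitting for `f` if its splitting
nodes branch only through values above `f`, while its branches infinitely often stay below `f` at
two consecutive positions. If `g ≤* f`, then the trees have no common splitting beyond a finite
level, so only countably many common branches; if `f ≤* g`, one of two consecutive positions being
even, they have no common branch at all.

A maximal `≤*`-chain of monotone functions is unbounded, and unboundedness is exactly what is needed
to find in every complete Laver tree a perfect low-splitting subtree, and in every Miller tree a
high-splitting Miller subtree, for functions from the chain. Comparability within the chain makes
all the intersections of bodies countable. A recursion of length `𝔠` then selects a point of each
low-splitting body so that fewer than `𝔠` points fall into each high-splitting body. The selected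
set meets every complete Laver tree; it misses one of `𝔠` many disjoint Miller subtrees of each
high-splitting Miller tree. -/

open Filter
open scoped Function Ordinal

section Cardinality

universe u

variable {α ι κ : Type u}

theorem exists_disjoint_of_mk_lt {B : ι → Set α} (hB : Pairwise (Disjoint on B)) {A : Set α}
    (hA : #A < #ι) : ∃ i, Disjoint (B i) A := by
  by_contra! h
  choose x hxB hxA using fun i => not_disjoint_iff.1 (h i)
  refine hA.not_ge (mk_le_of_injective (f := fun i => (⟨x i, hxA i⟩ : A)) fun i j hij => ?_)
  by_contra hne
  exact (hB hne).ne_of_mem (hxB i) (hxB j) (congrArg Subtype.val hij)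

theorem exists_mem_notMem_biUnion {c μ : Cardinal.{u}} (hc : ℵ₀ ≤ c) (hμ : μ < c) {E : Set α}
    (hE : c ≤ #E) {M : κ → Set α} (hEM : ∀ k, #(E ∩ M k : Set α) ≤ μ) {s : Set κ} (hs : #s < c) :
    ∃ x ∈ E, ∀ k ∈ s, x ∉ M k := by
  by_contra! h
  have hcover : E ⊆ ⋃ k ∈ s, E ∩ M k := fun x hx => by
    obtain ⟨k, hk, hxk⟩ := h x hx
    exact mem_biUnion hk ⟨hx, hxk⟩
  have hsup : ⨆ k : s, #(E ∩ M k : Set α) ≤ μ := ciSup_le' fun k => hEM k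
  have hEc : #E < c := calc
    #E ≤ #s * ⨆ k : s, #(E ∩ M k : Set α) := (mk_le_mk_of_subset hcover).trans (mk_biUnion_le _ _)
    _ < c := mul_lt_of_lt hc hs (hsup.trans_lt hμ)
  exact hEc.not_ge hE

theorem exists_inter_nonempty_and_mk_inter_lt {c μ : Cardinal.{u}} (hc : ℵ₀ ≤ c) (hμ : μ < c)
    (hι : #ι ≤ c) (hκ : #κ ≤ c) {E : ι → Set α} {M : κ → Set α} (hE : ∀ i, c ≤ #(E i))
    (hEM : ∀ i k, #(E i ∩ M k : Set α) ≤ μ) :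
    ∃ X : Set α, (∀ i, (E i ∩ X).Nonempty) ∧ ∀ k, #(X ∩ M k : Set α) < c := by
  obtain ⟨e⟩ : Nonempty (ι ↪ c.ord.ToType) := by rwa [← Cardinal.le_def, mk_ord_toType]
  obtain ⟨f⟩ : Nonempty (κ ↪ c.ord.ToType) := by rwa [← Cardinal.le_def, mk_ord_toType]
  have hord : ord #c.ord.ToType = typeLT c.ord.ToType := by
    rw [mk_ord_toType, Ordinal.type_toType]
  have hIio (a : c.ord.ToType) : #(Iio a) < c := (mk_Iio_lt a hord).trans_eq (mk_ord_toType c)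
  have hIic (a : c.ord.ToType) : #(Iic a) < c :=
    (mk_Iic_lt a hord (by rwa [mk_ord_toType])).trans_eq (mk_ord_toType c)
  have hearlier (i : ι) : #{k | f k < e i} < c :=
    (mk_preimage_of_injective f (Iio (e i)) f.injective).trans_lt (hIio (e i))
  choose x hxE hxM using fun i => exists_mem_notMem_biUnion hc hμ (hE i) (hEM i) (hearlier i)
  refine ⟨range x, fun i => ⟨x i, hxE i, mem_range_self i⟩, fun k => ?_⟩
  have hsub : range x ∩ M k ⊆ x '' (e ⁻¹' Iic (f k)) := by
    rintro _ ⟨⟨i, rfl⟩, hi⟩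
    have hle : e i ≤ f k := not_lt.1 fun hlt => hxM i k hlt hi
    exact ⟨i, hle, rfl⟩
  calc #(range x ∩ M k : Set α)
    _ ≤ #(e ⁻¹' Iic (f k)) := (mk_le_mk_of_subset hsub).trans mk_image_le
    _ ≤ #(Iic (f k)) := mk_preimage_of_injective e _ e.injective
    _ < c := hIic (f k)

end Cardinality

/-- Unboundedness of a family in `ω^ω` ordered by eventual domination. The members are monotone
(bundled as order homomorphisms), so that largeness at one argument passes to all later ones. -/
def IsUnboundedFamily (F : Set (ℕ →o ℕ)) : Prop :=
  ∀ h : ℕ → ℕ, ∃ g ∈ F, ¬ g ≤ᶠ[atTop] h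

theorem exists_isUnboundedFamily_isChain :
    ∃ F : Set (ℕ →o ℕ), IsUnboundedFamily F ∧ IsChain (fun f g : ℕ →o ℕ => f ≤ᶠ[atTop] g) F := by
  let r : (ℕ →o ℕ) → (ℕ →o ℕ) → Prop := fun f g => f ≤ᶠ[atTop] g
  have hmax : IsMaxChain r (maxChain r) := maxChain_spec
  refine ⟨maxChain r, fun h => ?_, hmax.isChain⟩
  by_contra! hbound
  let k : ℕ →o ℕ := partialSups fun n => h n + 1
  have hk (n : ℕ) : h n < k n := le_partialSups (fun n => h n + 1) n
  have hchain : IsChain r (insert k (maxChain r)) :=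
    hmax.isChain.insert fun g hg _ => .inr ((hbound g hg).trans (.of_forall fun n => (hk n).le))
  have hkmem : k ∈ maxChain r := by
    rw [hmax.2 hchain (subset_insert _ _)]
    exact mem_insert _ _
  obtain ⟨n, hn⟩ := (hbound k hkmem).exists
  exact (hk n).not_ge hn

theorem exists_forall_eventuallyLE {ι : Type*} [Countable ι] (h : ι → ℕ → ℕ) :
    ∃ H : ℕ → ℕ, ∀ i, h i ≤ᶠ[atTop] H := by
  cases isEmpty_or_nonempty ι
  · exact ⟨0, isEmptyElim⟩
  · obtain ⟨e, he⟩ := exists_surjective_nat ι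
    refine ⟨fun m => partialSups (fun k => h (e k) m) m, fun i => ?_⟩
    obtain ⟨k, rfl⟩ := he i
    filter_upwards [eventually_ge_atTop k] with m hkm
    exact le_partialSups_of_le (fun k => h (e k) m) hkm

theorem IsUnboundedFamily.exists_forall_infinite_lt {F : Set (ℕ →o ℕ)} (hF : IsUnboundedFamily F)
    {ι : Type*} [Countable ι] {A : ι → Set ℕ} (hA : ∀ i, (A i).Infinite) (h : ι → ℕ → ℕ) :
    ∃ g ∈ F, ∀ i, {n ∈ A i | h i n < g n}.Infinite := by
  choose next hnextA hlt_next using fun i => (hA i).exists_gt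
  obtain ⟨H, hH⟩ := exists_forall_eventuallyLE fun i m => h i (next i m)
  obtain ⟨g, hg, hgH⟩ := hF H
  refine ⟨g, hg, fun i => infinite_of_forall_exists_gt fun N => ?_⟩
  have hfreq : ∃ᶠ m in atTop, H m < g m := by
    simpa only [EventuallyLE, not_eventually, not_le] using hgH
  obtain ⟨m, hHg, hhH, hNm⟩ := (hfreq.and_eventually ((hH i).and (eventually_ge_atTop N))).exists
  exact ⟨next i m, ⟨hnextA i m, (hhH.trans_lt hHg).trans_le (g.monotone (hlt_next i m).le)⟩,
    hNm.trans_lt (hlt_next i m)⟩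

section Lists

variable {α : Type*}

theorem concat_prefix_of_prefix_of_prefix {s l t : List α} {a : α} (hs : s ++ [a] <+: l)
    (ht : t <+: l) (hlt : s.length < t.length) : s ++ [a] <+: t :=
  List.prefix_of_prefix_length_le hs ht (by simpa using hlt)

theorem eq_of_concat_prefix_of_concat_prefix {s l : List α} {a b : α} (ha : s ++ [a] <+: l)
    (hb : s ++ [b] <+: l) : a = b := by
  simpa using List.prefix_of_prefix_length_le ha hb (by simp)

theorem prefix_of_concat_prefix_of_ne {s t l₁ l₂ : List α} {a b : α} (hab : a ≠ b)
    (ha : s ++ [a] <+: l₁) (hb : s ++ [b] <+: l₂) (h₁ : t <+: l₁) (h₂ : t <+: l₂) : t <+: s := by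
  refine List.prefix_of_prefix_length_le h₁ ((List.prefix_append _ _).trans ha) ?_
  by_contra! hlt
  have hat : s ++ [a] <+: t := concat_prefix_of_prefix_of_prefix ha h₁ hlt
  exact hab (eq_of_concat_prefix_of_concat_prefix (hat.trans h₂) hb)

theorem eq_of_concat_prefix_of_ne {s t l₁ l₂ : List α} {a b c d : α} (hab : a ≠ b) (hcd : c ≠ d)
    (ha : s ++ [a] <+: l₁) (hb : s ++ [b] <+: l₂) (hc : t ++ [c] <+: l₁) (hd : t ++ [d] <+: l₂) :
    s = t := by
  have hst : s <+: t := prefix_of_concat_prefix_of_ne hcd hc hd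
    ((List.prefix_append _ _).trans ha) ((List.prefix_append _ _).trans hb)
  have hts : t <+: s := prefix_of_concat_prefix_of_ne hab ha hb
    ((List.prefix_append _ _).trans hc) ((List.prefix_append _ _).trans hd)
  exact hst.eq_of_length_le hts.length_le

theorem exists_concat_prefix_of_prefix {s t : List α} (h : s <+: t) (hlt : s.length < t.length) :
    ∃ a, s ++ [a] <+: t := by
  obtain ⟨_ | ⟨a, r⟩, rfl⟩ := h
  · simp at hlt
  · exact ⟨a, r, by simp⟩

theorem prefix_or_prefix_or_exists_concat_prefix (u w : List α) :
    u <+: w ∨ w <+: u ∨ ∃ v i j, i ≠ j ∧ v ++ [i] <+: u ∧ v ++ [j] <+: w := by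
  induction u generalizing w with
  | nil => exact .inl List.nil_prefix
  | cons i u ih =>
    rcases w with _ | ⟨j, w⟩
    · exact .inr (.inl List.nil_prefix)
    by_cases hij : i = j
    · subst hij
      rcases ih w with h | h | ⟨v, k, l, hkl, hu, hw⟩
      · exact .inl ((List.prefix_cons_inj i).2 h)
      · exact .inr (.inl ((List.prefix_cons_inj i).2 h))
      · exact .inr (.inr ⟨i :: v, k, l, hkl, (List.prefix_cons_inj i).2 hu,
          (List.prefix_cons_inj i).2 hw⟩)
    · exact .inr (.inr ⟨[], i, j, hij, ⟨u, rfl⟩, ⟨w, rfl⟩⟩)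

/-- The initial segment `x ↾ n` of an infinite sequence, so that `x ∈ treeBody T` unfolds to
`∀ n, initSeg x n ∈ T`. -/
def initSeg (x : ℕ → α) (n : ℕ) : List α := List.ofFn fun i : Fin n => x i

@[simp]
theorem length_initSeg (x : ℕ → α) (n : ℕ) : (initSeg x n).length = n := List.length_ofFn

theorem initSeg_succ (x : ℕ → α) (n : ℕ) : initSeg x (n + 1) = initSeg x n ++ [x n] :=
  List.ofFn_succ_last

theorem initSeg_prefix_initSeg (x : ℕ → α) {m n : ℕ} (h : m ≤ n) :
    initSeg x m <+: initSeg x n := by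
  induction n, h using Nat.le_induction with
  | base => exact List.prefix_rfl
  | succ n _ ih => exact initSeg_succ x n ▸ ih.trans (List.prefix_append _ _)

theorem eq_of_forall_ge_initSeg_eq {x y : ℕ → α} {N : ℕ}
    (h : ∀ n ≥ N, initSeg x n = initSeg y n) : x = y := by
  funext n
  have heq := h (max N (n + 1)) (le_max_left _ _)
  exact congrFun (List.ofFn_inj.1 heq) ⟨n, n.lt_succ_self.trans_le (le_max_right _ _)⟩

theorem exists_forall_initSeg_eq {l : ℕ → List α} (hpre : ∀ k, l k <+: l (k + 1))
    (hlength : ∀ k, k ≤ (l k).length) : ∃ x : ℕ → α, ∀ k, initSeg x (l k).length = l k := by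
  have hmono {j k : ℕ} (hjk : j ≤ k) : l j <+: l k := by
    induction k, hjk using Nat.le_induction with
    | base => exact List.prefix_rfl
    | succ k _ ih => exact ih.trans (hpre k)
  have hx (n : ℕ) : n < (l (n + 1)).length := hlength (n + 1)
  refine ⟨fun n => (l (n + 1))[n]'(hx n), fun k => List.ext_getElem (by simp) fun n h₁ h₂ => ?_⟩
  rw [length_initSeg] at h₁
  simp only [initSeg, List.getElem_ofFn]
  rcases le_total (n + 1) k with hk | hk
  · exact (hmono hk).getElem _
  · exact ((hmono hk).getElem _).symm

end Lists

/-- A monotone size of finite sequences that bounds both the length and the entries, so that a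
single `g : ℕ → ℕ` can be compared with the entry following any node `s` via `g (nodeWeight s)`. -/
def nodeWeight (s : List ℕ) : ℕ := s.sum + s.length

theorem nodeWeight_mono {s t : List ℕ} (h : s <+: t) : nodeWeight s ≤ nodeWeight t :=
  add_le_add (h.sublist.sum_le_sum fun _ _ => Nat.zero_le _) h.length_le

theorem length_le_nodeWeight (s : List ℕ) : s.length ≤ nodeWeight s := Nat.le_add_left _ _

theorem le_nodeWeight_concat (s : List ℕ) (n : ℕ) : n ≤ nodeWeight (s ++ [n]) := by
  simp only [nodeWeight, List.sum_append, List.sum_singleton]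
  lia

theorem tendsto_nodeWeight_initSeg (x : ℕ → ℕ) :
    Tendsto (fun n => nodeWeight (initSeg x n)) atTop atTop :=
  tendsto_atTop_mono (fun n => (length_initSeg x n).ge.trans (length_le_nodeWeight _)) tendsto_id

theorem IsTree.mem_of_prefix {T : Set (List ℕ)} (hT : IsTree T) {s t : List ℕ} (h : s <+: t)
    (ht : t ∈ T) : s ∈ T :=
  List.prefix_iff_eq_take.1 h ▸ hT.2 t ht s.length

theorem IsTree.nil_mem {T : Set (List ℕ)} (hT : IsTree T) : [] ∈ T :=
  hT.1.elim fun _ hs => hT.mem_of_prefix List.nil_prefix hs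

theorem treeBody_mono {S T : Set (List ℕ)} (h : S ⊆ T) : treeBody S ⊆ treeBody T :=
  fun _ hx n => h (hx n)

theorem countable_treeBody_of_forall_split_length_lt {T : Set (List ℕ)} {N : ℕ}
    (h : ∀ s m n, s ++ [m] ∈ T → s ++ [n] ∈ T → m ≠ n → s.length < N) :
    (treeBody T).Countable := by
  have hinj : InjOn (fun x : ℕ → ℕ => initSeg x N) (treeBody T) := fun x hx y hy hxy =>
    eq_of_forall_ge_initSeg_eq (N := N) fun n hn => by
      induction n, hn using Nat.le_induction with
      | base => exact hxy
      | succ n hn ih =>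
        have hmem (z) (hz : z ∈ treeBody T) : initSeg z n ++ [z n] ∈ T := initSeg_succ z n ▸ hz _
        rw [initSeg_succ, initSeg_succ, ih]
        by_contra hne
        have hlt : (initSeg y n).length < N :=
          h _ _ _ (ih ▸ hmem x hx) (hmem y hy) fun heq => hne (by rw [heq])
        exact hn.not_gt (by simpa using hlt)
  exact (mapsTo_univ _ _).countable_of_injOn hinj (to_countable _)

/-- Low-splitting trees: only values below `g` split, while each branch takes a value above `g` at
every even position. Their bodies supply the points chosen from complete Laver trees. -/
structure IsLowSplitting (g : ℕ → ℕ) (K : Set (List ℕ)) : Prop where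
  lt_of_split : ∀ s m n, s ++ [m] ∈ K → s ++ [n] ∈ K → m ≠ n → m < g (nodeWeight s)
  lt_even : ∀ x ∈ treeBody K, ∀ k, g (nodeWeight (initSeg x (2 * k))) < x (2 * k)

/-- High-splitting trees: only values above `f` split, while each branch infinitely often takes two
consecutive values below `f`, one of them necessarily at an even position. -/
structure IsHighSplitting (f : ℕ → ℕ) (M : Set (List ℕ)) : Prop where
  lt_of_split : ∀ s m n, s ++ [m] ∈ M → s ++ [n] ∈ M → m ≠ n → f (nodeWeight s) < m
  frequently_lt : ∀ x ∈ treeBody M, ∃ᶠ n in atTop, x n < f (nodeWeight (initSeg x n)) ∧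
    x (n + 1) < f (nodeWeight (initSeg x (n + 1)))

section Intersection

variable {f g : ℕ → ℕ} {K M : Set (List ℕ)}

theorem IsLowSplitting.countable_inter_of_le (hK : IsLowSplitting g K) (hM : IsHighSplitting f M)
    (hgf : g ≤ᶠ[atTop] f) : (treeBody K ∩ treeBody M).Countable := by
  obtain ⟨N, hN⟩ := eventually_atTop.1 hgf
  have hsub : treeBody K ∩ treeBody M ⊆ treeBody (K ∩ M) := fun x hx n => ⟨hx.1 n, hx.2 n⟩
  refine (countable_treeBody_of_forall_split_length_lt (N := N) fun s m n hm hn hmn => ?_).mono hsub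
  by_contra! hlong
  have hle : g (nodeWeight s) ≤ f (nodeWeight s) := hN _ (hlong.trans (length_le_nodeWeight s))
  have hlow : m < g (nodeWeight s) := hK.lt_of_split s m n hm.1 hn.1 hmn
  have hhigh : f (nodeWeight s) < m := hM.lt_of_split s m n hm.2 hn.2 hmn
  lia

theorem IsLowSplitting.disjoint_of_le (hK : IsLowSplitting g K) (hM : IsHighSplitting f M)
    (hfg : f ≤ᶠ[atTop] g) : Disjoint (treeBody K) (treeBody M) := by
  refine disjoint_left.2 fun x hxK hxM => ?_
  have hle : ∀ᶠ n in atTop, f (nodeWeight (initSeg x n)) ≤ g (nodeWeight (initSeg x n)) :=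
    (tendsto_nodeWeight_initSeg x).eventually hfg
  obtain ⟨n, ⟨hn, hn₁⟩, hle⟩ :=
    ((hM.frequently_lt x hxM).and_eventually (eventually_forall_ge_atTop.2 hle)).exists
  rcases Nat.even_or_odd' n with ⟨k, rfl | rfl⟩
  · exact ((hn.trans_le (hle _ le_rfl)).trans (hK.lt_even x hxK k)).false
  · exact ((hn₁.trans_le (hle _ (Nat.le_succ _))).trans (hK.lt_even x hxK (k + 1))).false

theorem IsLowSplitting.countable_inter_of_isChain {F : Set (ℕ →o ℕ)}
    (hF : IsChain (fun f g : ℕ →o ℕ => f ≤ᶠ[atTop] g) F) {f g : ℕ →o ℕ} (hf : f ∈ F) (hg : g ∈ F)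
    (hK : IsLowSplitting g K) (hM : IsHighSplitting f M) : (treeBody K ∩ treeBody M).Countable := by
  rcases eq_or_ne g f with rfl | hne
  · exact hK.countable_inter_of_le hM (.refl _ _)
  rcases hF hg hf hne with hgf | hfg
  · exact hK.countable_inter_of_le hM hgf
  · exact (hK.disjoint_of_le hM hfg).inter_eq ▸ countable_empty

end Intersection

/-- A fusion scheme: nodes of a tree indexed by finite sequences over `α`, where the child `i` of
the node indexed by `w` leaves that node through the immediate successor `label w i`. -/
structure FusionScheme (α : Type*) where
  node : List α → List ℕ
  label : List α → α → ℕ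
  label_injective : ∀ w, Function.Injective (label w)
  node_concat_prefix : ∀ w i, node w ++ [label w i] <+: node (w ++ [i])

namespace FusionScheme

variable {α β : Type*} (S : FusionScheme α)

/-- The tree generated by a fusion scheme: all initial segments of its nodes. -/
def tree : Set (List ℕ) := {t | ∃ w, t <+: S.node w}

/-- The fusion scheme obtained by iterating a successor function on a type `σ` of states, where
`val s` is the node attached to the state `s`. -/
def ofStep {σ : Type*} (val : σ → List ℕ) (root : σ) (next : σ → α → σ) (label : σ → α → ℕ)
    (hlabel : ∀ s, Function.Injective (label s))
    (hnext : ∀ s i, val s ++ [label s i] <+: val (next s i)) : FusionScheme α where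
  node w := val (w.foldl next root)
  label w := label (w.foldl next root)
  label_injective _ := hlabel _
  node_concat_prefix w i := by simpa only [List.foldl_concat] using hnext _ i

/-- The subscheme keeping, below a node of level `k`, only the children in the range of `φ k`. -/
def reindex (φ : ℕ → β → α) (hφ : ∀ k, Function.Injective (φ k)) : FusionScheme β where
  node w := S.node (w.mapIdx φ)
  label w i := S.label (w.mapIdx φ) (φ w.length i)
  label_injective w := (S.label_injective _).comp (hφ w.length)
  node_concat_prefix w i := by simpa only [List.mapIdx_concat] using S.node_concat_prefix _ _

theorem tree_reindex_subset (φ : ℕ → β → α) (hφ : ∀ k, Function.Injective (φ k)) :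
    (S.reindex φ hφ).tree ⊆ S.tree := fun _ ⟨_, ht⟩ => ⟨_, ht⟩

theorem node_mem_tree (w : List α) : S.node w ∈ S.tree := ⟨w, List.prefix_rfl⟩

theorem isTree_tree : IsTree S.tree :=
  ⟨⟨_, S.node_mem_tree []⟩, fun _ ⟨w, ht⟩ n => ⟨w, (List.take_prefix n _).trans ht⟩⟩

theorem tree_subset {T : Set (List ℕ)} (hT : IsTree T) (h : ∀ w, S.node w ∈ T) : S.tree ⊆ T :=
  fun _ ⟨w, ht⟩ => hT.mem_of_prefix ht (h w)

theorem isMillerTree_tree [Infinite α] : IsMillerTree S.tree :=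
  ⟨S.isTree_tree, fun _ ⟨w, ht⟩ => ⟨S.node w, S.node_mem_tree w, ht,
    (infinite_range_of_injective (S.label_injective w)).mono <| by
      rintro _ ⟨i, rfl⟩
      exact ⟨w ++ [i], S.node_concat_prefix w i⟩⟩⟩

theorem node_prefix_node {u w : List α} (h : u <+: w) : S.node u <+: S.node w := by
  induction w using List.reverseRecOn with
  | nil => rw [List.prefix_nil.1 h]
  | append_singleton w i ih =>
    rcases List.prefix_concat_iff.1 h with rfl | h
    · exact List.prefix_rfl
    · exact (ih h).trans ((List.prefix_append _ _).trans (S.node_concat_prefix w i))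

theorem node_concat_prefix_node {u w : List α} {i : α} (h : u ++ [i] <+: w) :
    S.node u ++ [S.label u i] <+: S.node w :=
  (S.node_concat_prefix u i).trans (S.node_prefix_node h)

theorem length_le_length_node (w : List α) : w.length ≤ (S.node w).length := by
  induction w using List.reverseRecOn with
  | nil => exact Nat.zero_le _
  | append_singleton w i ih =>
    have hlength := (S.node_concat_prefix w i).length_le
    simp only [List.length_append, List.length_singleton] at hlength ⊢
    lia

theorem prefix_or_prefix_of_node_prefix {u w : List α} {l : List ℕ} (hu : S.node u <+: l)
    (hw : S.node w <+: l) : u <+: w ∨ w <+: u := by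
  rcases prefix_or_prefix_or_exists_concat_prefix u w with h | h | ⟨v, i, j, hij, hvu, hvw⟩
  · exact .inl h
  · exact .inr h
  · exact absurd (S.label_injective v (eq_of_concat_prefix_of_concat_prefix
      ((S.node_concat_prefix_node hvu).trans hu) ((S.node_concat_prefix_node hvw).trans hw))) hij

theorem eq_of_initSeg_eq_node {x : ℕ → ℕ} {u w : List α} (hlength : u.length = w.length)
    (hu : initSeg x (S.node u).length = S.node u) (hw : initSeg x (S.node w).length = S.node w) :
    u = w := by
  let n := max (S.node u).length (S.node w).length
  have hun : S.node u <+: initSeg x n := hu ▸ initSeg_prefix_initSeg x (le_max_left _ _)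
  have hwn : S.node w <+: initSeg x n := hw ▸ initSeg_prefix_initSeg x (le_max_right _ _)
  rcases S.prefix_or_prefix_of_node_prefix hun hwn with h | h
  · exact h.eq_of_length hlength
  · exact (h.eq_of_length hlength.symm).symm

theorem exists_eq_node_of_split {s : List ℕ} {m n : ℕ} (hm : s ++ [m] ∈ S.tree)
    (hn : s ++ [n] ∈ S.tree) (hmn : m ≠ n) : ∃ w i, s = S.node w ∧ m = S.label w i := by
  obtain ⟨u, hu⟩ := hm
  obtain ⟨w, hw⟩ := hn
  rcases prefix_or_prefix_or_exists_concat_prefix u w with h | h | ⟨v, i, j, hij, hvu, hvw⟩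
  · exact absurd
      (eq_of_concat_prefix_of_concat_prefix (hu.trans (S.node_prefix_node h)) hw) hmn
  · exact absurd
      (eq_of_concat_prefix_of_concat_prefix hu (hw.trans (S.node_prefix_node h))) hmn
  · have hi := S.node_concat_prefix_node hvu
    have hj := S.node_concat_prefix_node hvw
    obtain rfl : s = S.node v :=
      eq_of_concat_prefix_of_ne hmn ((S.label_injective v).ne hij) hu hw hi hj
    exact ⟨v, i, rfl, eq_of_concat_prefix_of_concat_prefix hu hi⟩

theorem exists_concat_prefix_of_initSeg_prefix {x : ℕ → ℕ} {u w : List α} {n : ℕ}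
    (hu : initSeg x (S.node u).length = S.node u) (hn : (S.node u).length < n)
    (hw : initSeg x n <+: S.node w) :
    ∃ i, u ++ [i] <+: w ∧ S.label u i = x (S.node u).length := by
  have huw : S.node u <+: S.node w := hu ▸ (initSeg_prefix_initSeg x hn.le).trans hw
  have hlt : (S.node u).length < (S.node w).length := hn.trans_le (by simpa using hw.length_le)
  have hpre : u <+: w :=
    (S.prefix_or_prefix_of_node_prefix huw List.prefix_rfl).resolve_right fun h =>
      hlt.not_ge (S.node_prefix_node h).length_le
  have hne : u.length < w.length := hpre.length_le.lt_of_ne fun h =>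
    hlt.ne (by rw [hpre.eq_of_length h])
  obtain ⟨i, hi⟩ := exists_concat_prefix_of_prefix hpre hne
  refine ⟨i, hi, ?_⟩
  have hx : S.node u ++ [x (S.node u).length] <+: S.node w := by
    have hsucc := (initSeg_prefix_initSeg x hn).trans hw
    rwa [initSeg_succ, hu] at hsucc
  exact eq_of_concat_prefix_of_concat_prefix (S.node_concat_prefix_node hi) hx

theorem exists_initSeg_eq_node {x : ℕ → ℕ} (hx : x ∈ treeBody S.tree) (k : ℕ) :
    ∃ w, w.length = k ∧ initSeg x (S.node w).length = S.node w := by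
  induction k with
  | zero =>
    obtain ⟨w, hw⟩ := hx (S.node []).length
    refine ⟨[], rfl, List.IsPrefix.eq_of_length ?_ (length_initSeg _ _)⟩
    exact List.prefix_of_prefix_length_le hw (S.node_prefix_node List.nil_prefix)
      (length_initSeg _ _).le
  | succ k ih =>
    obtain ⟨u, rfl, hu⟩ := ih
    obtain ⟨w, hw⟩ := hx ((S.node u).length + 1)
    obtain ⟨i, -, hi⟩ := S.exists_concat_prefix_of_initSeg_prefix hu (Nat.lt_succ_self _) hw
    obtain ⟨w', hw'⟩ := hx (S.node (u ++ [i])).length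
    have hlt : (S.node u).length < (S.node (u ++ [i])).length := by
      simpa using (S.node_concat_prefix u i).length_le
    obtain ⟨j, hj, hxj⟩ := S.exists_concat_prefix_of_initSeg_prefix hu hlt hw'
    obtain rfl : i = j := S.label_injective u (hi.trans hxj.symm)
    refine ⟨u ++ [i], by simp, List.IsPrefix.eq_of_length ?_ (length_initSeg _ _)⟩
    exact List.prefix_of_prefix_length_le hw' (S.node_prefix_node hj) (length_initSeg _ _).le

theorem exists_eq_of_mem_treeBody_reindex {φ ψ : ℕ → β → α} {hφ : ∀ k, Function.Injective (φ k)}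
    {hψ : ∀ k, Function.Injective (ψ k)} {x : ℕ → ℕ}
    (hxφ : x ∈ treeBody (S.reindex φ hφ).tree) (hxψ : x ∈ treeBody (S.reindex ψ hψ).tree) (k : ℕ) :
    ∃ i j, φ k i = ψ k j := by
  obtain ⟨u, hku, hu⟩ := exists_initSeg_eq_node _ hxφ (k + 1)
  obtain ⟨w, hkw, hw⟩ := exists_initSeg_eq_node _ hxψ (k + 1)
  have heq : u.mapIdx φ = w.mapIdx ψ := S.eq_of_initSeg_eq_node (by simp [hku, hkw]) hu hw
  have hk : k < (u.mapIdx φ).length := by simp [hku]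
  exact ⟨u[k], w[k], by simpa using List.getElem_of_eq heq hk⟩

theorem exists_pairwise_disjoint_isMillerTree (S : FusionScheme ℕ) :
    ∃ B : (ℕ → Bool) → Set (List ℕ), (∀ z, IsMillerTree (B z) ∧ B z ⊆ S.tree) ∧
      Pairwise (Disjoint on fun z => treeBody (B z)) := by
  let φ (z : ℕ → Bool) (k i : ℕ) : ℕ := Equiv.boolProdNatEquivNat (z k, i)
  have hφ (z) (k) : Function.Injective (φ z k) :=
    Equiv.boolProdNatEquivNat.injective.comp (Prod.mk_right_injective (z k))
  refine ⟨fun z => (S.reindex (φ z) (hφ z)).tree, fun z => ⟨isMillerTree_tree _,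
    S.tree_reindex_subset _ _⟩, fun z z' hzz' => disjoint_left.2 fun x hx hx' => hzz' ?_⟩
  funext k
  obtain ⟨i, j, hij⟩ := S.exists_eq_of_mem_treeBody_reindex hx hx' k
  exact congrArg Prod.fst (Equiv.boolProdNatEquivNat.injective hij)

theorem exists_injective_mem_treeBody :
    ∃ b : (ℕ → α) → ℕ → ℕ, Function.Injective b ∧ ∀ y, b y ∈ treeBody S.tree := by
  have hbranch (y : ℕ → α) : ∃ x : ℕ → ℕ, ∀ k,
      initSeg x (S.node (initSeg y k)).length = S.node (initSeg y k) :=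
    exists_forall_initSeg_eq (fun k => S.node_prefix_node (initSeg_prefix_initSeg y k.le_succ))
      fun k => (length_initSeg y k).ge.trans (S.length_le_length_node _)
  choose b hb using hbranch
  refine ⟨b, fun y y' h => eq_of_forall_ge_initSeg_eq (N := 0) fun n _ => ?_, fun y n => ?_⟩
  · exact S.eq_of_initSeg_eq_node (by simp) (hb y n) (h ▸ hb y' n)
  · refine ⟨initSeg y n, hb y n ▸ initSeg_prefix_initSeg _ ?_⟩
    exact (length_initSeg y n).ge.trans (S.length_le_length_node _)

theorem continuum_le_mk_treeBody (S : FusionScheme Bool) : 𝔠 ≤ #(treeBody S.tree) := by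
  obtain ⟨b, hb, hmem⟩ := S.exists_injective_mem_treeBody
  calc 𝔠 = #(ℕ → Bool) := by simp
    _ ≤ #(treeBody S.tree) := mk_le_of_injective (hb.codRestrict hmem)

end FusionScheme

/-- The nodes of `P` with infinitely many immediate successors in `P` (the ω-splitting nodes). They
are the nodes at which subtrees of a Miller tree `P` are allowed to branch. -/
def infSplit (P : Set (List ℕ)) : Set (List ℕ) := {s ∈ P | (succs P s).Infinite}

theorem IsMillerTree.exists_mem_infSplit_of_length_le {P : Set (List ℕ)} (hP : IsMillerTree P)
    {s : List ℕ} (hs : s ∈ P) (N : ℕ) : ∃ t ∈ infSplit P, s <+: t ∧ N ≤ t.length := by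
  induction N with
  | zero =>
    obtain ⟨t, ht, hst, hinf⟩ := hP.2 s hs
    exact ⟨t, ⟨ht, hinf⟩, hst, Nat.zero_le _⟩
  | succ N ih =>
    obtain ⟨t, ⟨-, htinf⟩, hst, hN⟩ := ih
    obtain ⟨n, hn⟩ := htinf.nonempty
    obtain ⟨u, hu, htu, huinf⟩ := hP.2 _ hn
    have hlength : t.length + 1 ≤ u.length := by simpa using htu.length_le
    exact ⟨u, ⟨hu, huinf⟩, hst.trans ((List.prefix_append _ _).trans htu), by lia⟩

theorem lt_of_initSeg_eq_of_sum_lt {f : ℕ →o ℕ} {x : ℕ → ℕ} {s t : List ℕ} {n k : ℕ}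
    (hst : s ++ [n] <+: t) (ht : initSeg x t.length = t) (hsum : t.sum < f n) (hsk : s.length < k)
    (hkt : k < t.length) : x k < f (nodeWeight (initSeg x k)) := by
  have hmem : x k ∈ t := by
    have hpre := initSeg_prefix_initSeg x (Nat.succ_le_of_lt hkt)
    rw [initSeg_succ, ht] at hpre
    exact hpre.subset (by simp)
  have hsn : s ++ [n] <+: initSeg x k :=
    List.prefix_of_prefix_length_le hst (ht ▸ initSeg_prefix_initSeg x hkt.le) (by simpa using hsk)
  calc x k ≤ t.sum := List.le_sum_of_mem hmem
    _ < f n := hsum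
    _ ≤ f (nodeWeight (initSeg x k)) :=
      f.monotone ((le_nodeWeight_concat s n).trans (nodeWeight_mono hsn))


namespace IsUnboundedFamily

variable {F : Set (ℕ →o ℕ)} {P Q : Set (List ℕ)}

theorem exists_forall_injective_lt (hF : IsUnboundedFamily F) (hQ : IsCompleteLaverTree Q) :
    ∃ g ∈ F, ∀ q ∈ Q, ∃ n ∈ succs Q q, ∃ m : Bool → ℕ, g (nodeWeight q) < n ∧
      Function.Injective m ∧
      ∀ i, m i ∈ succs Q (q ++ [n]) ∧ m i < g (nodeWeight (q ++ [n])) := by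
  have hpair : ∀ q ∈ Q, ∃ m₀ ∈ succs Q q, ∃ m₁ ∈ succs Q q, m₀ < m₁ := fun q hq =>
    (hQ.2 q hq).nonempty.imp fun m hm => ⟨hm, (hQ.2 q hq).exists_gt m⟩
  choose! m₀ hm₀ m₁ hm₁ hlt using hpair
  obtain ⟨g, hg, hlarge⟩ := hF.exists_forall_infinite_lt (A := fun q : Q => succs Q q)
    (fun q => hQ.2 q q.2) fun q n => m₁ (q ++ [n])
  refine ⟨g, hg, fun q hq => ?_⟩
  obtain ⟨n, ⟨hn, hm₁g⟩, hgn⟩ := (hlarge ⟨q, hq⟩).exists_gt (g (nodeWeight q))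
  have hlow : m₁ (q ++ [n]) < g (nodeWeight (q ++ [n])) :=
    hm₁g.trans_le (g.monotone (le_nodeWeight_concat q n))
  refine ⟨n, hn, fun i => cond i (m₁ (q ++ [n])) (m₀ (q ++ [n])), hgn, ?_, ?_⟩
  · exact Bool.injective_iff.2 (hlt _ hn).ne
  · exact Bool.forall_bool.2 ⟨⟨hm₀ _ hn, (hlt _ hn).trans hlow⟩, hm₁ _ hn, hlow⟩

theorem exists_isLowSplitting_subset (hF : IsUnboundedFamily F) (hQ : IsCompleteLaverTree Q) :
    ∃ g ∈ F, ∃ K ⊆ Q, IsLowSplitting g K ∧ 𝔠 ≤ #(treeBody K) := by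
  obtain ⟨g, hg, hstep⟩ := hF.exists_forall_injective_lt hQ
  choose n hn m hgn hinj hm using fun q : Q => hstep q q.2
  let S : FusionScheme Bool := .ofStep (fun q : Q => q ++ [n q]) ⟨[], hQ.1.nil_mem⟩
    (fun q i => ⟨q ++ [n q] ++ [m q i], (hm q i).1⟩) m hinj fun q i => List.prefix_append _ _
  have hS (w : List Bool) : ∃ q : Q, S.node w = q ++ [n q] ∧ S.label w = m q := ⟨_, rfl, rfl⟩
  have hlength (w : List Bool) : (S.node w).length = 2 * w.length + 1 := by
    induction w using List.reverseRecOn with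
    | nil => rfl
    | append_singleton w i ih =>
      have hconcat : (S.node (w ++ [i])).length = (S.node w).length + 2 := by
        simp [S, FusionScheme.ofStep]
      rw [hconcat, ih, List.length_append, List.length_singleton, mul_add]
  refine ⟨g, hg, S.tree, S.tree_subset hQ.1 fun w => ?_, ⟨fun s a b ha hb hab => ?_,
    fun x hx k => ?_⟩, S.continuum_le_mk_treeBody⟩
  · obtain ⟨q, hnode, -⟩ := hS w
    exact hnode ▸ hn q
  · obtain ⟨w, i, rfl, rfl⟩ := S.exists_eq_node_of_split ha hb hab
    obtain ⟨q, hnode, hlabel⟩ := hS w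
    rw [hnode, hlabel]
    exact (hm q i).2
  · obtain ⟨w, rfl, hw⟩ := S.exists_initSeg_eq_node hx k
    obtain ⟨q, hnode, -⟩ := hS w
    rw [hlength, hnode, initSeg_succ] at hw
    obtain ⟨hq, hxn⟩ := List.append_inj' hw rfl
    rw [hq, List.head_eq_of_cons_eq hxn]
    exact hgn q

theorem exists_forall_infinite_succs (hF : IsUnboundedFamily F) (hP : IsMillerTree P) :
    ∃ f ∈ F, ∀ s ∈ infSplit P, {n | f (nodeWeight s) < n ∧ ∃ t ∈ infSplit P, s ++ [n] <+: t ∧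
      s.length + 3 ≤ t.length ∧ t.sum < f n}.Infinite := by
  choose! t ht hpre hlength using fun s (hs : s ∈ P) =>
    hP.exists_mem_infSplit_of_length_le hs (s.length + 2)
  obtain ⟨f, hf, hlarge⟩ := hF.exists_forall_infinite_lt (A := fun s : infSplit P => succs P s)
    (fun s => s.2.2) fun s n => (t (s ++ [n])).sum
  refine ⟨f, hf, fun s hs => ?_⟩
  refine ((hlarge ⟨s, hs⟩).sdiff (finite_Iic (f (nodeWeight s)))).mono ?_
  rintro n ⟨⟨hn, hsum⟩, hfn⟩
  exact ⟨not_le.1 hfn, t (s ++ [n]), ht _ hn, hpre _ hn, by simpa using hlength _ hn, hsum⟩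

theorem exists_forall_injective_gt (hF : IsUnboundedFamily F) (hP : IsMillerTree P) :
    ∃ f ∈ F, ∀ s : infSplit P, ∃ a : ℕ → ℕ, Function.Injective a ∧ ∀ i, f (nodeWeight s) < a i ∧
      ∃ t : infSplit P, s.1 ++ [a i] <+: t ∧ s.1.length + 3 ≤ t.1.length ∧ t.1.sum < f (a i) := by
  obtain ⟨f, hf, hinf⟩ := hF.exists_forall_infinite_succs hP
  refine ⟨f, hf, fun s => ?_⟩
  let e := (hinf s s.2).natEmbedding
  refine ⟨fun i => e i, Subtype.val_injective.comp e.injective, fun i => ?_⟩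
  obtain ⟨hlt, t, ht, htail⟩ := (e i).2
  exact ⟨hlt, ⟨t, ht⟩, htail⟩

theorem exists_fusionScheme_isHighSplitting (hF : IsUnboundedFamily F) (hP : IsMillerTree P) :
    ∃ f ∈ F, ∃ S : FusionScheme ℕ, S.tree ⊆ P ∧ IsHighSplitting f S.tree := by
  obtain ⟨f, hf, hstep⟩ := hF.exists_forall_injective_gt hP
  choose a ha hfa next hpre hlength hsum using hstep
  obtain ⟨root, hroot, -, hinf⟩ := hP.2 [] hP.1.nil_mem
  let S : FusionScheme ℕ := .ofStep (fun s : infSplit P => s.1) ⟨root, hroot, hinf⟩ next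
    a ha hpre
  have hS (w : List ℕ) : ∃ s : infSplit P, S.node w = s ∧ S.label w = a s ∧
      ∀ i, S.node (w ++ [i]) = next s i :=
    ⟨_, rfl, rfl, fun i => congrArg Subtype.val (List.foldl_concat ..)⟩
  refine ⟨f, hf, S, S.tree_subset hP.1 fun w => ?_, fun s m n hm hn hmn => ?_, fun x hx => ?_⟩
  · obtain ⟨s, hnode, -⟩ := hS w
    exact hnode ▸ s.2.1
  · obtain ⟨w, i, rfl, rfl⟩ := S.exists_eq_node_of_split hm hn hmn
    obtain ⟨s, hnode, hlabel, -⟩ := hS w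
    rw [hnode, hlabel]
    exact hfa s i
  · refine frequently_atTop.2 fun N => ?_
    obtain ⟨w, hw, hx⟩ := S.exists_initSeg_eq_node hx (N + 1)
    obtain rfl | ⟨u, i, rfl⟩ := w.eq_nil_or_concat'
    · simp at hw
    obtain ⟨s, hnode, -, hnext⟩ := hS u
    have hN : N ≤ s.1.length := by
      rw [List.length_append, List.length_singleton, Nat.add_right_cancel_iff] at hw
      exact hw ▸ hnode ▸ S.length_le_length_node u
    rw [hnext] at hx
    have hlow {k : ℕ} (hsk : s.1.length < k) (hks : k < s.1.length + 3) :
        x k < f (nodeWeight (initSeg x k)) :=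
      lt_of_initSeg_eq_of_sum_lt (hpre s i) hx (hsum s i) hsk (hks.trans_le (hlength s i))
    exact ⟨s.1.length + 1, by lia, hlow (by lia) (by lia), hlow (by lia) (by lia)⟩

end IsUnboundedFamily

theorem isCompleteLaverTree_univ : IsCompleteLaverTree univ :=
  ⟨⟨univ_nonempty, fun _ _ _ => mem_univ _⟩, fun _ _ => infinite_univ⟩

/-- there is X ⊆ ω^ω with X ∈ m₀ and X ∉ cl₀. -/
theorem stmt1 :
    ∃ X : Set (ℕ → ℕ),
      X ∈ treeIdeal {T | IsMillerTree T} ∧ X ∉ treeIdeal {T | IsCompleteLaverTree T} := by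
  obtain ⟨F, hF, hchain⟩ := exists_isUnboundedFamily_isChain
  choose g hg K hKQ hK hKmk using fun Q : {Q | IsCompleteLaverTree Q} =>
    hF.exists_isLowSplitting_subset Q.2
  choose f hf S hSP hS using fun P : {P | IsMillerTree P} =>
    hF.exists_fusionScheme_isHighSplitting P.2
  have hcard (𝕋 : Set (Set (List ℕ))) : #𝕋 ≤ 𝔠 := (mk_set_le 𝕋).trans (by simp)
  obtain ⟨X, hXK, hXS⟩ := exists_inter_nonempty_and_mk_inter_lt aleph0_le_continuum
    aleph0_lt_continuum (hcard _) (hcard _) hKmk fun Q P => le_aleph0_iff_set_countable.2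
      ((hK Q).countable_inter_of_isChain hchain (hf P) (hg Q) (hS P))
  refine ⟨X, fun P hP => ?_, fun hX => ?_⟩
  · obtain ⟨B, hB, hdisj⟩ := (S ⟨P, hP⟩).exists_pairwise_disjoint_isMillerTree
    obtain ⟨z, hz⟩ := exists_disjoint_of_mk_lt hdisj ((hXS ⟨P, hP⟩).trans_eq (by simp))
    refine ⟨B z, (hB z).1, (hB z).2.trans (hSP _), disjoint_iff_inter_eq_empty.1 ?_⟩
    refine disjoint_left.2 fun x hxB hxX => disjoint_left.1 hz hxB ⟨hxX, ?_⟩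
    exact treeBody_mono (hB z).2 hxB
  · obtain ⟨Q, hQ, -, hQX⟩ := hX univ isCompleteLaverTree_univ
    obtain ⟨x, hxK, hxX⟩ := hXK ⟨Q, hQ⟩
    exact (hQX ▸ ⟨treeBody_mono (hKQ _) hxK, hxX⟩ : x ∈ (∅ : Set (ℕ → ℕ)))
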